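/- arXiv:0909.5216 — 2 statements merged into one kernel-verified Lean document; each statement's English description precedes it below -/
import Mathlib

section
/- Let d ≥ 4 and let ρ = (ρ₁,…,ρ_{d−1}) be a vector with each ρ_i ∈ (−1,1)∖{0} and |ρ_i| < ρcrit = 0.63055 for all i. Then the chain maximizes the approximate error exponent: there exists an arrangement σ of ρ on the path graph on d vertices such that for every tree T on d vertices and every arrangement π of ρ on T, K̃(T, π, ρ) ≤ K̃(path, σ, ρ). -/
/-!
The crossover rate `Jt a b` depends only on `s = a²` and `t = b²`. With `P = 1/(1-s)`, `Q = 1/(1-t)`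
and `w = P - Q` it equals `(log P - log Q)² / (8 w (1 + 2w))` (`Fsq`, `Jt_eq`). Two monotonicity
facts carry the argument.

* For fixed `s` the rate decreases in `t` (`Fsq_anti`), since it is the square of a chord slope of
  `log` times `w / (1 + 2w)`. Hence on any tree only paths of length two matter.
* For fixed `r < 2/5` the map `s ↦ Fsq s (s r)` increases on `(0, r]` (`Fsq_mono`). After bounding
  the logarithm by a Padé approximant, the sign of the derivative is a polynomial inequality. Note
  that `0.63055² < 2/5`, and that only the range `s ≤ r` is needed.

Together they give `Fsq_cross`: if `f ≤ s ≤ l ≤ e`, the rate of the pair `{f, e}` read at the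
weaker edge `f` is at most both rates of the pair `{s, l}`. So a pair of adjacent edges is bad when
its strengths are far apart, and the best chain sorts the correlations by magnitude. Indeed, let
`s ≤ l` be consecutive in the sorted order. In any tree, by connectedness, some edge of strength at
most `s` is adjacent to an edge of strength at least `l` (`exists_crossing`), and that pair bounds
the exponent of the tree by the contribution of `{s, l}` to the exponent of the sorted chain.
-/


noncomputable def Jt (a b : ℝ) : ℝ :=
  ((1 / 2) * Real.log ((1 - b ^ 2) / (1 - a ^ 2))) ^ 2 /
    (2 * (b ^ 4 + b ^ 2) / (1 - b ^ 2) ^ 2 + 2 * (a ^ 4 + a ^ 2) / (1 - a ^ 2) ^ 2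
      - 4 * b ^ 2 * (a ^ 2 + 1) / ((1 - b ^ 2) * (1 - a ^ 2)))

/-- The approximate error exponent K̃(G,ρ): the infimum of J̃(ρ_e, ρ_{e′}) over all
non-edges e′ = {u,v} and all edges e on the (unique) path joining u and v, where the
correlation of the non-edge is the product of the edge correlations along that path. -/
noncomputable def Ktilde {V : Type*} (G : SimpleGraph V) (ρ : Sym2 V → ℝ) : ℝ :=
  sInf { x : ℝ | ∃ (u v : V) (p : G.Walk u v), p.IsPath ∧ u ≠ v ∧ ¬ G.Adj u v ∧
    ∃ e ∈ p.edges, x = Jt (ρ e) ((p.edges.map ρ).prod) }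

/-- The edge correlations induced by an arrangement `π` of the correlation vector `ρ`
on the edges of `G`. -/
noncomputable def arrange {V : Type*} (G : SimpleGraph V) {n : ℕ}
    (π : G.edgeSet ≃ Fin n) (ρ : Fin n → ℝ) : Sym2 V → ℝ := fun e =>
  letI := Classical.dec (e ∈ G.edgeSet)
  if h : e ∈ G.edgeSet then ρ (π ⟨e, h⟩) else 0

/-! ### Monotonicity of the crossover rate -/

section Analysis

open Real

/-- The difference of the two sides has derivative `(x - 1)³ / (x (2x + 1)²)`. -/
theorem log_le_pade {x : ℝ} (hx : 1 ≤ x) :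
    log x ≤ (x - 1) * (x + 5) / (2 * (2 * x + 1)) := by
  let g : ℝ → ℝ := fun y => (y - 1) * (y + 5) / (2 * (2 * y + 1)) - log y
  have hd : ∀ y : ℝ, 1 ≤ y → HasDerivAt g ((y - 1) ^ 3 / (y * (2 * y + 1) ^ 2)) y := by
    intro y hy
    have h1 : HasDerivAt (fun y : ℝ => (y - 1) * (y + 5)) (1 * (y + 5) + (y - 1) * 1) y :=
      ((hasDerivAt_id y).sub_const 1).mul ((hasDerivAt_id y).add_const 5)
    have h2 : HasDerivAt (fun y : ℝ => 2 * (2 * y + 1)) (2 * (2 * 1)) y :=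
      (((hasDerivAt_id y).const_mul 2).add_const 1).const_mul 2
    have h3 := (h1.div h2 (by positivity)).sub (hasDerivAt_log (by positivity : y ≠ 0))
    refine h3.congr_deriv ?_
    have : y ≠ 0 := by positivity
    have : 2 * y + 1 ≠ 0 := by positivity
    field_simp
    ring
  have hm : MonotoneOn g (Set.Ici 1) := by
    refine monotoneOn_of_deriv_nonneg (convex_Ici 1)
      (fun y hy => (hd y hy).continuousAt.continuousWithinAt) ?_ ?_
    · intro y hy
      rw [interior_Ici] at hy
      exact (hd y hy.le).differentiableAt.differentiableWithinAt
    · intro y hy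
      rw [interior_Ici] at hy
      have hy' : 1 < y := hy
      rw [(hd y hy'.le).deriv]
      have : 0 < y - 1 := by linarith
      positivity
  have := hm (Set.mem_Ici.2 le_rfl) (Set.mem_Ici.2 hx) hx
  simp only [g] at this
  norm_num at this
  linarith

/-- The crossover rate as a function of the squared correlations `s = a²` and `t = b²`, in the
simplified form given by the variable `w = 1/(1-s) - 1/(1-t)`. -/
noncomputable def Fsq (s t : ℝ) : ℝ :=
  (log (1 - t) - log (1 - s)) ^ 2 /
    (8 * ((1 - s)⁻¹ - (1 - t)⁻¹) * (1 + 2 * ((1 - s)⁻¹ - (1 - t)⁻¹)))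

theorem poly_c0 {s : ℝ} (hs : 0 < s) (hs2 : s ≤ 2/5) :
    0 ≤ 6 - 17*s - 10*s^2 + 42*s^3 + 17*s^4 - 73*s^5 + 36*s^6 - s^8 := by
  have h5 : s^5 ≤ (2/5)*s^4 := by rw [pow_succ, mul_comm]; gcongr
  have h8 : s^8 ≤ s^6 := pow_le_pow_of_le_one hs.le (by linarith) (by norm_num)
  have h6 : 0 ≤ s^6 := by positivity
  have h4 : s^4 ≤ (2/5)*s^3 := by rw [pow_succ, mul_comm]; gcongr
  have h3 : 0 ≤ s^3 := by positivity
  nlinarith [mul_nonneg hs.le (sub_nonneg.2 hs2), sq_nonneg (s - 2/5), mul_nonneg hs.le (sq_nonneg (s-2/5))]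

theorem poly_c1 {s : ℝ} (hs : 0 < s) (hs2 : s ≤ 2/5) :
    0 ≤ (6 - 17*s - 10*s^2 + 42*s^3 + 17*s^4 - 73*s^5 + 36*s^6 - s^8) +
      1/25 * (-13 + 38*s + 36*s^2 - 135*s^3 + 72*s^4 + 5*s^5 - 3*s^6) := by
  have h5 : s^5 ≤ (2/5)*s^4 := by rw [pow_succ, mul_comm]; gcongr
  have h8 : s^8 ≤ s^6 := pow_le_pow_of_le_one hs.le (by linarith) (by norm_num)
  have h6 : 0 ≤ s^6 := by positivity
  have h4 : s^4 ≤ (2/5)*s^3 := by rw [pow_succ, mul_comm]; gcongr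
  have h3 : 0 ≤ s^3 := by positivity
  nlinarith [mul_nonneg hs.le (sub_nonneg.2 hs2), sq_nonneg (s - 2/5), mul_nonneg hs.le (sq_nonneg (s-2/5))]

theorem poly_c2 {s : ℝ} (hs : 0 < s) (hs2 : s ≤ 2/5) :
    0 ≤ 19 - 62*s+36*s^2+10*s^3-3*s^4 := by
  have h4 : s^4 ≤ (2/5)*s^3 := by rw [pow_succ, mul_comm]; gcongr
  have h3 : 0 ≤ s^3 := by positivity
  nlinarith [mul_nonneg hs.le (sub_nonneg.2 hs2), sq_nonneg (s - 2/5), mul_nonneg hs.le (sq_nonneg (s-2/5))]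

/-- With `v = s (r - s) ∈ [0, 1/25]` the difference of the two sides is a cubic in `v`. Its quadratic
and cubic coefficients are nonnegative (`poly_c2`), and its affine part is nonnegative at both ends
of the interval (`poly_c0`, `poly_c1`). -/
theorem poly_ineq {r s : ℝ} (hs : 0 < s) (hsr : s ≤ r) (hr : r < 2 / 5) :
    (6 - r * s - 5 * s) * (1 - r * s ^ 2) * ((1 - s) * (1 - r * s) + 4 * (s * (1 - r))) ≤
    4 * (1 - s) * (3 - 2 * r * s - s) * ((1 - s) * (1 - r * s) + 2 * (s * (1 - r))) := by
  have hs2 : s ≤ 2 / 5 := by linarith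
  obtain ⟨v, hv⟩ : ∃ v, v = s * (r - s) := ⟨_, rfl⟩
  have hv0 : 0 ≤ v := hv ▸ mul_nonneg hs.le (by linarith)
  have hv1 : v ≤ 1 / 25 := by nlinarith [sq_nonneg (s - 1 / 5)]
  have h0 := mul_nonneg (poly_c0 hs hs2) (by linarith : 0 ≤ 1 - 25 * v)
  have h1 := mul_nonneg (poly_c1 hs hs2) (by linarith : 0 ≤ 25 * v)
  have h2 := mul_nonneg (poly_c2 hs hs2) (sq_nonneg v)
  have h3 : 0 ≤ s * (5 - s) * v ^ 3 := by
    have : 0 ≤ 5 - s := by linarith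
    positivity
  have e : 4 * (1 - s) * (3 - 2 * r * s - s) * ((1 - s) * (1 - r * s) + 2 * (s * (1 - r))) -
      (6 - r * s - 5 * s) * (1 - r * s ^ 2) * ((1 - s) * (1 - r * s) + 4 * (s * (1 - r))) =
      (6 - 17*s - 10*s^2 + 42*s^3 + 17*s^4 - 73*s^5 + 36*s^6 - s^8) * (1 - 25 * v) +
      ((6 - 17*s - 10*s^2 + 42*s^3 + 17*s^4 - 73*s^5 + 36*s^6 - s^8) +
      1/25 * (-13 + 38*s + 36*s^2 - 135*s^3 + 72*s^4 + 5*s^5 - 3*s^6)) * (25 * v) +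
      (19 - 62*s+36*s^2+10*s^3-3*s^4) * v ^ 2 + s * (5 - s) * v ^ 3 := by
    rw [hv]; ring
  linarith

theorem inv_sub_inv_pos' {s t : ℝ} (hts : t < s) (hs : s < 1) : 0 < (1 - s)⁻¹ - (1 - t)⁻¹ := by
  have : (1 - t)⁻¹ < (1 - s)⁻¹ := by
    apply inv_strictAnti₀ <;> linarith
  linarith

theorem Jt_eq {a b : ℝ} (hba : b ^ 2 < a ^ 2) (ha : a ^ 2 < 1) : Jt a b = Fsq (a ^ 2) (b ^ 2) := by
  have hp : 0 < 1 - a ^ 2 := by linarith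
  have hq : 0 < 1 - b ^ 2 := by linarith
  have hw := inv_sub_inv_pos' hba ha
  rw [Jt, Fsq, log_div hq.ne' hp.ne', mul_pow]
  have : (2 * (b ^ 4 + b ^ 2) / (1 - b ^ 2) ^ 2 + 2 * (a ^ 4 + a ^ 2) / (1 - a ^ 2) ^ 2
      - 4 * b ^ 2 * (a ^ 2 + 1) / ((1 - b ^ 2) * (1 - a ^ 2))) =
      (8 * ((1 - a ^ 2)⁻¹ - (1 - b ^ 2)⁻¹) * (1 + 2 * ((1 - a ^ 2)⁻¹ - (1 - b ^ 2)⁻¹))) / 4 := by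
    field_simp
    ring
  rw [this]
  have : 0 < (8 * ((1 - a ^ 2)⁻¹ - (1 - b ^ 2)⁻¹) * (1 + 2 * ((1 - a ^ 2)⁻¹ - (1 - b ^ 2)⁻¹))) := by
    positivity
  field_simp
  ring

theorem Fsq_nonneg {s t : ℝ} (hts : t < s) (hs : s < 1) : 0 ≤ Fsq s t := by
  have hw := inv_sub_inv_pos' hts hs
  unfold Fsq
  positivity

/-- A non-edge with a stronger correlation is easier to confuse with a given edge. -/
theorem Fsq_anti {s t₁ t₂ : ℝ} (h12 : t₁ ≤ t₂) (h2 : t₂ < s) (hs : s < 1) :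
    Fsq s t₂ ≤ Fsq s t₁ := by
  rcases h12.eq_or_lt with rfl | h12
  · exact le_rfl
  have hw2 := inv_sub_inv_pos' h2 hs
  have hw1 := inv_sub_inv_pos' (h12.trans h2) hs
  have hw12 := inv_sub_inv_pos' h12 (h2.trans hs)
  have hp : 0 < 1 - s := by linarith
  have hq2 : 0 < 1 - t₂ := by linarith
  have hq1 : 0 < 1 - t₁ := by linarith
  have hsl := strictConcaveOn_log_Ioi.concaveOn.slope_anti_adjacent (x := (1 - t₁)⁻¹)
    (y := (1 - t₂)⁻¹) (z := (1 - s)⁻¹) (inv_pos.2 hq1) (inv_pos.2 hp) (by linarith) (by linarith)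
  rw [log_inv, log_inv, log_inv] at hsl
  have hl2 : 0 < log (1 - t₂) - log (1 - s) := by
    have := log_lt_log hp (by linarith : 1 - s < 1 - t₂)
    linarith
  have hl12 : 0 < log (1 - t₁) - log (1 - t₂) := by
    have := log_lt_log hq2 (by linarith : 1 - t₂ < 1 - t₁)
    linarith
  -- Square of the slope of a chord of `log`, times an increasing function of `w`.
  have form : ∀ t, 0 < (1 - s)⁻¹ - (1 - t)⁻¹ → Fsq s t = ((log (1 - t) - log (1 - s)) / ((1 - s)⁻¹ - (1 - t)⁻¹)) ^ 2
      * (((1 - s)⁻¹ - (1 - t)⁻¹) / (8 * (1 + 2 * ((1 - s)⁻¹ - (1 - t)⁻¹)))) := by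
    intro t ht
    unfold Fsq
    field_simp
  rw [form _ hw2, form _ hw1]
  have hw21 : (1 - s)⁻¹ - (1 - t₂)⁻¹ ≤ (1 - s)⁻¹ - (1 - t₁)⁻¹ := by linarith
  have e1 : (log (1 - t₂) - log (1 - s)) / ((1 - s)⁻¹ - (1 - t₂)⁻¹) ≤
      (log (1 - t₁) - log (1 - s)) / ((1 - s)⁻¹ - (1 - t₁)⁻¹) := by
    rw [div_le_div_iff₀ (by linarith) (by linarith)] at hsl
    rw [div_le_div_iff₀ hw2 hw1]
    linarith
  have e2 : ((1 - s)⁻¹ - (1 - t₂)⁻¹) / (8 * (1 + 2 * ((1 - s)⁻¹ - (1 - t₂)⁻¹))) ≤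
      ((1 - s)⁻¹ - (1 - t₁)⁻¹) / (8 * (1 + 2 * ((1 - s)⁻¹ - (1 - t₁)⁻¹))) := by
    rw [div_le_div_iff₀ (by positivity) (by positivity)]
    linarith
  gcongr

/-- Up to a positive factor, this says that `s ↦ Fsq s (s r)` has nonnegative derivative. -/
theorem deriv_ineq {r s : ℝ} (hs : 0 < s) (hsr : s ≤ r) (hr : r < 2 / 5) :
    (log (1 - r * s) - log (1 - s)) * ((1 - r * s ^ 2) * ((1 - s) * (1 - r * s) + 4 * (s * (1 - r))))
      ≤ 2 * (s * (1 - r)) * ((1 - s) * (1 - r * s) + 2 * (s * (1 - r))) := by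
  have hp : 0 < 1 - s := by linarith
  have hq : 0 < 1 - r * s := by nlinarith
  have hr1 : 0 < 1 - r := by linarith
  have hx : 1 ≤ (1 - r * s) / (1 - s) := by
    rw [le_div_iff₀ hp]; nlinarith
  have hlog := log_le_pade hx
  rw [log_div hq.ne' hp.ne'] at hlog
  have hk : 0 < 3 - 2 * r * s - s := by nlinarith
  have e : ((1 - r * s) / (1 - s) - 1) * ((1 - r * s) / (1 - s) + 5) /
      (2 * (2 * ((1 - r * s) / (1 - s)) + 1)) =
      s * (1 - r) * (6 - r * s - 5 * s) / (2 * (1 - s) * (3 - 2 * r * s - s)) := by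
    have h : 2 * ((1 - r * s) / (1 - s)) + 1 = (3 - 2 * r * s - s) / (1 - s) := by
      field_simp
      ring
    rw [h]
    field_simp
    ring
  rw [e] at hlog
  have hpos : 0 ≤ (1 - r * s ^ 2) * ((1 - s) * (1 - r * s) + 4 * (s * (1 - r))) := by
    have : 0 ≤ 1 - r * s ^ 2 := by nlinarith
    positivity
  refine (mul_le_mul_of_nonneg_right hlog hpos).trans ?_
  rw [div_mul_eq_mul_div, div_le_iff₀ (by positivity)]
  have := mul_le_mul_of_nonneg_left (poly_ineq hs hsr hr) (by positivity : 0 ≤ s * (1 - r))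
  linarith

/-- When two edges of squared correlations `s ≤ r` meet, the rate at the weaker one increases with
`s`. -/
theorem Fsq_mono {r s₁ s₂ : ℝ} (h1 : 0 < s₁) (h12 : s₁ ≤ s₂) (h2 : s₂ ≤ r) (hr : r < 2 / 5) :
    Fsq s₁ (s₁ * r) ≤ Fsq s₂ (s₂ * r) := by
  have hd : ∀ s, 0 < s → s ≤ r → ∃ D, 0 ≤ D ∧ HasDerivAt (fun s => Fsq s (s * r)) D s := by
    intro s hs hsr
    have hp : 0 < 1 - s := by linarith
    have hq : 0 < 1 - s * r := by nlinarith
    have hr1 : 0 < 1 - r := by linarith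
    have hts : s * r < s := by nlinarith
    have hw := inv_sub_inv_pos' hts (by linarith)
    have dp : HasDerivAt (fun s : ℝ => 1 - s) (-1) s := (hasDerivAt_id s).const_sub 1
    have dq : HasDerivAt (fun s : ℝ => 1 - s * r) (-(1 * r)) s :=
      ((hasDerivAt_id s).mul_const r).const_sub 1
    have dL := (dq.log hq.ne').sub (dp.log hp.ne')
    have dw := (dp.fun_inv hp.ne').sub (dq.fun_inv hq.ne')
    have dM := (dw.const_mul 8).mul ((dw.const_mul 2).const_add 1)
    have dF := (dL.pow 2).div dM (by
      simp only [Pi.sub_apply, Pi.mul_apply]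
      positivity)
    refine ⟨_, ?_, dF⟩
    apply div_nonneg _ (sq_nonneg _)
    simp only [Pi.sub_apply, Pi.mul_apply, Pi.pow_apply]
    have hL : 0 < log (1 - s * r) - log (1 - s) := by
      have := log_lt_log hp (by linarith : 1 - s < 1 - s * r)
      linarith
    have key := deriv_ineq hs hsr hr
    rw [mul_comm r s] at key
    have hp' := hp.ne'
    have hq' := hq.ne'
    have hq'' : 1 - r * s ≠ 0 := by rwa [mul_comm r s]
    generalize log (1 - s * r) - log (1 - s) = L at *
    -- The numerator of the derivative is this factor times the difference of the sides of `key`.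
    have hfac : 0 ≤ 8 * L * (1 - r) / ((1 - s) * (1 - s * r)) ^ 3 := by positivity
    have := mul_le_mul_of_nonneg_left key hfac
    rw [← sub_nonneg] at this
    convert this using 1
    push_cast
    field_simp
    ring
  have hm : MonotoneOn (fun s => Fsq s (s * r)) (Set.Icc s₁ r) := by
    refine monotoneOn_of_deriv_nonneg (convex_Icc _ _) ?_ ?_ ?_
    · intro y hy
      obtain ⟨D, -, hD⟩ := hd y (h1.trans_le hy.1) hy.2
      exact hD.continuousAt.continuousWithinAt
    · intro y hy
      rw [interior_Icc] at hy
      obtain ⟨D, -, hD⟩ := hd y (h1.trans hy.1) hy.2.le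
      exact hD.differentiableAt.differentiableWithinAt
    · intro y hy
      rw [interior_Icc] at hy
      obtain ⟨D, hD0, hD⟩ := hd y (h1.trans hy.1) hy.2.le
      rw [hD.deriv]
      exact hD0
  exact hm ⟨le_rfl, h12.trans h2⟩ ⟨h12, h2⟩ h12

/-- A pair `{f, e}` of adjacent edges is at least as bad as any pair `{s, l}` nested in between, where
the first is read at its weaker edge and the second at either edge. -/
theorem Fsq_cross {f s l e : ℝ} (hf : 0 < f) (hfs : f ≤ s) (hsl : s ≤ l) (hle : l ≤ e)
    (he : e < 2 / 5) : Fsq f (f * e) ≤ Fsq s (s * l) ∧ Fsq f (f * e) ≤ Fsq l (s * l) := by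
  have h1 : Fsq f (f * e) ≤ Fsq f (f * l) := Fsq_anti (by gcongr) (by nlinarith) (by linarith)
  refine ⟨h1.trans (Fsq_mono hf hfs hsl (by linarith)), ?_⟩
  refine h1.trans ((Fsq_mono hf (hfs.trans hsl) le_rfl (by linarith)).trans ?_)
  exact Fsq_anti (by nlinarith) (by nlinarith) (by linarith)

end Analysis

/-! ### Paths and adjacent edges -/

/-- Every edge `s(a, b)` of a path of length at least two has an adjacent edge `s(b, c)` on it. -/
theorem exists_adjacent_edge {V : Type*} {G : SimpleGraph V} {u v : V} (p : G.Walk u v)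
    (hp : p.IsPath) (hlen : 2 ≤ p.length) {e : Sym2 V} (he : e ∈ p.edges) :
    ∃ a b c : V, a ≠ c ∧ G.Adj a b ∧ G.Adj b c ∧ e = s(a, b) ∧ s(b, c) ∈ p.edges := by
  induction p with
  | nil => simp at he
  | @cons u w v h q ih =>
    rw [SimpleGraph.Walk.cons_isPath_iff] at hp
    cases q with
    | nil => simp at hlen
    | @cons _ x _ h' q' =>
      have hux : u ≠ x := by
        rintro rfl
        exact hp.2 (by simp)
      rw [SimpleGraph.Walk.edges_cons, List.mem_cons] at he
      rcases he with rfl | he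
      · exact ⟨u, w, x, hux, h, h', rfl, by simp⟩
      · by_cases hq : 2 ≤ (SimpleGraph.Walk.cons h' q').length
        · obtain ⟨a, b, c, hac, hab, hbc, rfl, hm⟩ := ih hp.1 hq he
          exact ⟨a, b, c, hac, hab, hbc, rfl, List.mem_cons_of_mem _ hm⟩
        · cases q' with
          | nil =>
            have : e = s(w, v) := by simpa using he
            exact ⟨v, w, u, hux.symm, h'.symm, h.symm, this.trans Sym2.eq_swap,
              by simp [Sym2.eq_swap]⟩
          | cons _ _ => simp at hq

theorem abs_prod_le_one {ι : Type*} (f : ι → ℝ) (l : List ι) (h : ∀ i ∈ l, |f i| ≤ 1) :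
    |(l.map f).prod| ≤ 1 := by
  induction l with
  | nil => simp
  | cons a l ih =>
    rw [List.map_cons, List.prod_cons, abs_mul]
    exact mul_le_one₀ (h a (by simp)) (abs_nonneg _) (ih fun i hi => h i (by simp [hi]))

theorem sq_prod_le {ι : Type*} (f : ι → ℝ) (l : List ι) (h : ∀ i ∈ l, |f i| ≤ 1) {i j : ι}
    (hij : i ≠ j) (hi : i ∈ l) (hj : j ∈ l) : (l.map f).prod ^ 2 ≤ f i ^ 2 * f j ^ 2 := by
  classical
  have hj' : j ∈ l.erase i := (List.mem_erase_of_ne hij.symm).2 hj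
  rw [← List.prod_map_erase f hi, ← List.prod_map_erase f hj']
  have := abs_prod_le_one f ((l.erase i).erase j)
    fun k hk => h k (List.mem_of_mem_erase (List.mem_of_mem_erase hk))
  have h1 : (((l.erase i).erase j).map f).prod ^ 2 ≤ 1 := by
    rwa [sq_le_one_iff_abs_le_one]
  have : (0 : ℝ) ≤ f i ^ 2 * f j ^ 2 := by positivity
  nlinarith

/-- Each term in the infimum defining `Ktilde` is at least the rate of some pair of adjacent edges. -/
theorem exponent_ge_pair {V : Type*} {G : SimpleGraph V} {w : Sym2 V → ℝ}
    (hw : ∀ e ∈ G.edgeSet, 0 < w e ^ 2 ∧ w e ^ 2 < 2 / 5) {u v : V} (p : G.Walk u v)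
    (hp : p.IsPath) (huv : u ≠ v) (hadj : ¬ G.Adj u v) {e : Sym2 V} (he : e ∈ p.edges) :
    ∃ a b c : V, a ≠ c ∧ G.Adj a b ∧ G.Adj b c ∧
      Fsq (w s(a, b) ^ 2) (w s(a, b) ^ 2 * w s(b, c) ^ 2) ≤ Jt (w e) ((p.edges.map w).prod) := by
  have hlen : 2 ≤ p.length := by
    by_contra! hlt
    cases p with
    | nil => exact huv rfl
    | cons h q =>
      cases q with
      | nil => exact hadj h
      | cons _ _ => simp at hlt
  obtain ⟨a, b, c, hac, hab, hbc, rfl, hf⟩ := exists_adjacent_edge p hp hlen he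
  refine ⟨a, b, c, hac, hab, hbc, ?_⟩
  have h1 := hw s(a, b) hab
  have h2 := hw s(b, c) hbc
  have hle : ∀ i ∈ p.edges, |w i| ≤ 1 := fun i hi => by
    have := hw i (p.edges_subset_edgeSet hi)
    rw [← sq_le_one_iff_abs_le_one]
    linarith
  have hne : s(a, b) ≠ s(b, c) := by
    rw [Ne, Sym2.eq_iff]
    have := hab.ne
    tauto
  have hsq := sq_prod_le w p.edges hle hne he hf
  have hlt : w s(a, b) ^ 2 * w s(b, c) ^ 2 < w s(a, b) ^ 2 := by nlinarith
  rw [Jt_eq (hsq.trans_lt hlt) (by linarith)]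
  exact Fsq_anti hsq hlt (by linarith)

theorem Ktilde_le_pair {V : Type*} {G : SimpleGraph V} (hG : G.IsAcyclic) {w : Sym2 V → ℝ}
    (hw : ∀ e ∈ G.edgeSet, 0 < w e ^ 2 ∧ w e ^ 2 < 2 / 5) {a b c : V} (hab : G.Adj a b)
    (hbc : G.Adj b c) (hac : a ≠ c) :
    Ktilde G w ≤ Fsq (w s(a, b) ^ 2) (w s(a, b) ^ 2 * w s(b, c) ^ 2) := by
  have h1 := hw s(a, b) hab
  have h2 := hw s(b, c) hbc
  have hlt : w s(a, b) ^ 2 * w s(b, c) ^ 2 < w s(a, b) ^ 2 := by nlinarith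
  have hp : (SimpleGraph.Walk.cons hab (SimpleGraph.Walk.cons hbc .nil)).IsPath := by
    simp [SimpleGraph.Walk.cons_isPath_iff, hab.ne, hbc.ne, hac]
  have hnadj : ¬ G.Adj a c := by
    intro h
    have hq : (SimpleGraph.Walk.cons h .nil).IsPath := by
      simp [SimpleGraph.Walk.cons_isPath_iff, hac]
    have := congrArg (fun p => p.1.length) ((hG.subsingleton_path a c).elim ⟨_, hp⟩ ⟨_, hq⟩)
    simp at this
  refine csInf_le ⟨0, ?_⟩ ⟨a, c, _, hp, hac, hnadj, s(a, b), by simp, ?_⟩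
  · rintro x ⟨u, v, p, hp, huv, hnadj, e, he, rfl⟩
    obtain ⟨a, b, c, -, hab, hbc, hle⟩ := exponent_ge_pair hw p hp huv hnadj he
    have h1 := hw s(a, b) hab
    have h2 := hw s(b, c) hbc
    exact (Fsq_nonneg (by nlinarith) (by linarith)).trans hle
  · have e : ((SimpleGraph.Walk.cons hab (SimpleGraph.Walk.cons hbc .nil)).edges.map w).prod =
        w s(a, b) * w s(b, c) := by simp
    rw [e, Jt_eq (by rw [mul_pow]; exact hlt) (by linarith), mul_pow]

/-- If a connected graph has an edge in `S` and one outside `S`, then some two such edges share a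
vertex. -/
theorem exists_crossing {V : Type*} {G : SimpleGraph V} (hG : G.Preconnected) (S : Sym2 V → Prop)
    {e f : Sym2 V} (he : e ∈ G.edgeSet) (hf : f ∈ G.edgeSet) (heS : S e) (hfS : ¬ S f) :
    ∃ a b c : V, G.Adj a b ∧ G.Adj b c ∧ S s(a, b) ∧ ¬ S s(b, c) := by
  by_contra! hcon
  induction e using Sym2.ind with | _ a b =>
  induction f using Sym2.ind with | _ c c' =>
  -- Otherwise the property that all edges at a vertex lie in `S` spreads along walks.
  have step : ∀ {x z}, G.Walk x z → (∀ y, G.Adj x y → S s(x, y)) → ∀ y, G.Adj z y → S s(z, y) := by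
    intro x z p h0
    induction p with
    | nil => exact h0
    | cons h q ih => exact ih fun y hy => hcon _ _ _ h hy (h0 _ h)
  obtain ⟨p⟩ := hG b c
  exact hfS (step p (fun y hy => hcon _ _ _ he hy heS) c' hf)

/-! ### The sorted chain -/

/-- The edge `{i, i + 1}` of the path graph on `Fin d`. -/
def chainEdge (d : ℕ) (i : Fin (d - 1)) : (SimpleGraph.pathGraph d).edgeSet :=
  ⟨s(⟨i, by omega⟩, ⟨i + 1, by omega⟩), by
    simp [SimpleGraph.mem_edgeSet, SimpleGraph.pathGraph_adj]⟩

theorem chainEdge_bijective (d : ℕ) : Function.Bijective (chainEdge d) := by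
  constructor
  · intro i j h
    have h' := congrArg Subtype.val h
    simp only [chainEdge, Sym2.eq_iff, Fin.mk.injEq] at h'
    ext
    omega
  · rintro ⟨e, he⟩
    induction e using Sym2.ind with | _ u v =>
    have h : u.val + 1 = v.val ∨ v.val + 1 = u.val := SimpleGraph.pathGraph_adj.1 he
    rcases h with h | h
    · refine ⟨⟨u, by omega⟩, Subtype.ext ?_⟩
      simp only [chainEdge, Sym2.eq_iff, Fin.ext_iff, true_and]
      omega
    · refine ⟨⟨v, by omega⟩, Subtype.ext ?_⟩
      simp only [chainEdge, Sym2.eq_iff, Fin.ext_iff, true_and]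
      omega

theorem arrange_apply {V : Type*} (G : SimpleGraph V) {n : ℕ} (π : G.edgeSet ≃ Fin n)
    (ρ : Fin n → ℝ) (e : G.edgeSet) : arrange G π ρ e = ρ (π e) := by
  simp [arrange]

/-- Adjacent distinct edges of the path graph are consecutive in the numbering `chainEdge`. -/
theorem consecutive_edges {d : ℕ} {a b c : Fin d} (hac : a ≠ c)
    (hab : (SimpleGraph.pathGraph d).Adj a b) (hbc : (SimpleGraph.pathGraph d).Adj b c) :
    ∃ i j : Fin (d - 1), i.val + 1 = j.val ∧
      (s(a, b) = (chainEdge d i).1 ∧ s(b, c) = (chainEdge d j).1 ∨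
        s(a, b) = (chainEdge d j).1 ∧ s(b, c) = (chainEdge d i).1) := by
  rw [SimpleGraph.pathGraph_adj] at hab hbc
  have hac' : a.val ≠ c.val := fun h => hac (Fin.ext h)
  rcases hab with h1 | h1 <;> rcases hbc with h2 | h2
  · refine ⟨⟨a, by omega⟩, ⟨b, by omega⟩, h1, Or.inl ?_⟩
    simp only [chainEdge, Sym2.eq_iff, Fin.ext_iff, true_and]
    omega
  · omega
  · omega
  · refine ⟨⟨c, by omega⟩, ⟨b, by omega⟩, h2, Or.inr ?_⟩
    simp only [chainEdge, Sym2.eq_iff, Fin.ext_iff, and_true]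
    omega

/-- If all correlation magnitudes are below ρcrit = 0.63055, the chain (path graph)
maximizes the approximate error exponent: some arrangement of ρ on the path dominates
every arrangement of ρ on every tree on d vertices. -/
theorem chain_maximizes (d : ℕ) (hd : 4 ≤ d) (ρ : Fin (d - 1) → ℝ)
    (hρ : ∀ i, ρ i ∈ Set.Ioo (-1 : ℝ) 1 ∧ ρ i ≠ 0)
    (hcrit : ∀ i, |ρ i| < 0.63055) :
    ∃ σ : (SimpleGraph.pathGraph d).edgeSet ≃ Fin (d - 1),
      ∀ (T : SimpleGraph (Fin d)), T.IsTree → ∀ π : T.edgeSet ≃ Fin (d - 1),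
        Ktilde T (arrange T π ρ) ≤
          Ktilde (SimpleGraph.pathGraph d) (arrange (SimpleGraph.pathGraph d) σ ρ) := by
  have hsq : ∀ i, 0 < ρ i ^ 2 ∧ ρ i ^ 2 < 2 / 5 := fun i => by
    refine ⟨by have := (hρ i).2; positivity, ?_⟩
    rw [← sq_abs]
    have := hcrit i
    nlinarith [abs_nonneg (ρ i)]
  have hw : ∀ (G : SimpleGraph (Fin d)) (π : G.edgeSet ≃ Fin (d - 1)), ∀ e ∈ G.edgeSet,
      0 < arrange G π ρ e ^ 2 ∧ arrange G π ρ e ^ 2 < 2 / 5 := fun G π e he => by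
    rw [arrange_apply G π ρ ⟨e, he⟩]
    exact hsq _
  -- The chain is arranged by increasing magnitude of the correlations.
  let τ : Equiv.Perm (Fin (d - 1)) := Tuple.sort fun i => ρ i ^ 2
  have hτ : ∀ {i j}, i ≤ j → ρ (τ i) ^ 2 ≤ ρ (τ j) ^ 2 := fun {i j} hij =>
    Tuple.monotone_sort (fun i => ρ i ^ 2) hij
  let σ := (Equiv.ofBijective _ (chainEdge_bijective d)).symm.trans τ
  have hσ : ∀ i, arrange _ σ ρ (chainEdge d i).1 = ρ (τ i) := fun i => by
    rw [arrange_apply]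
    exact congrArg (fun k => ρ (τ k))
      ((Equiv.ofBijective _ (chainEdge_bijective d)).symm_apply_apply i)
  refine ⟨σ, fun T hT π => le_csInf ?_ ?_⟩
  · have h01 : (SimpleGraph.pathGraph d).Adj ⟨0, by omega⟩ ⟨1, by omega⟩ := by
      simp [SimpleGraph.pathGraph_adj]
    have h12 : (SimpleGraph.pathGraph d).Adj ⟨1, by omega⟩ ⟨2, by omega⟩ := by
      simp [SimpleGraph.pathGraph_adj]
    exact ⟨_, _, _, .cons h01 (.cons h12 .nil), by simp [SimpleGraph.Walk.cons_isPath_iff],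
      by simp, by simp [SimpleGraph.pathGraph_adj], _, List.mem_cons_self, rfl⟩
  · rintro x ⟨u, v, p, hp, huv, hnadj, e, he, rfl⟩
    obtain ⟨a, b, c, hac, hab, hbc, hle⟩ := exponent_ge_pair (hw _ σ) p hp huv hnadj he
    refine le_trans ?_ hle
    obtain ⟨i, j, hij, hcase⟩ := consecutive_edges hac hab hbc
    -- `s(x, y)` has rank at most `i` and `s(y, z)` has rank at least `j = i + 1`.
    obtain ⟨x, y, z, hxy, hyz, ⟨hs, hxS⟩, hyS⟩ := exists_crossing hT.connected.preconnected
      (fun e => ∃ h : e ∈ T.edgeSet, τ.symm (π ⟨e, h⟩) ≤ i)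
      (π.symm (τ i)).2 (π.symm (τ j)).2 ⟨Subtype.prop _, by simp⟩
      (by
        rintro ⟨h, hle⟩
        simp only [Subtype.coe_eta, Equiv.apply_symm_apply, Equiv.symm_apply_apply] at hle
        have : j.val ≤ i.val := hle
        omega)
    have hyz' : s(y, z) ∈ T.edgeSet := hyz
    have hjle : j ≤ τ.symm (π ⟨s(y, z), hyz'⟩) := by
      by_contra! hlt
      refine hyS ⟨hyz', ?_⟩
      rw [Fin.lt_def] at hlt
      rw [Fin.le_def]
      omega
    have hxz : x ≠ z := by
      rintro rfl
      exact hyS ⟨hyz', by simpa only [Sym2.eq_swap] using hxS⟩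
    have hK := Ktilde_le_pair hT.isAcyclic (hw T π) hxy hyz hxz
    rw [arrange_apply T π ρ ⟨s(x, y), hs⟩, arrange_apply T π ρ ⟨s(y, z), hyz'⟩] at hK
    have h1 := hτ hxS
    have h2 := hτ hjle
    rw [Equiv.apply_symm_apply] at h1 h2
    have hcross := Fsq_cross (hsq _).1 h1 (hτ (show i ≤ j by rw [Fin.le_def]; omega)) h2 (hsq _).2
    rcases hcase with ⟨h, h'⟩ | ⟨h, h'⟩
    · rw [h, h', hσ, hσ]
      exact hK.trans hcross.1
    · rw [h, h', hσ, hσ, mul_comm]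
      exact hK.trans hcross.2
end

section
/- Let ρ_i, ρ_j, ρ_k ∈ (−1,1)∖{0} satisfy |ρ_i| ≥ |ρ_j| ≥ |ρ_k| and |ρ_i| ≤ ρcrit, where ρcrit = 0.63055. Then W(ρ_i, ρ_k) ≤ min{ W(ρ_i, ρ_j), W(ρ_j, ρ_k) }. -/
noncomputable def W (a b : ℝ) : ℝ := min (Jt a (a * b)) (Jt b (a * b))

namespace Crossover

open Set

/-! ### Reduction to the squared correlations -/

/-- The gap `1/(1-x) - 1/(1-w)`, the variable in which the denominator of `Jt` factors. -/
noncomputable def gap (x w : ℝ) : ℝ := 1 / (1 - x) - 1 / (1 - w)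

/-- `8 * Jt a b` in the squared variables `x = a ^ 2`, `w = b ^ 2`. -/
noncomputable def F (x w : ℝ) : ℝ :=
  (Real.log (1 - w) - Real.log (1 - x)) ^ 2 / (gap x w * (1 + 2 * gap x w))

/-- The denominator of `Jt` equals `2 * gap * (1 + 2 * gap)`. -/
lemma Jt_eq (a b : ℝ) (ha : a ^ 2 < 1) (hb : b ^ 2 < 1) :
    Jt a b = F (a ^ 2) (b ^ 2) / 8 := by
  have h1 : (1 - a ^ 2) ≠ 0 := by linarith
  have h2 : (1 - b ^ 2) ≠ 0 := by linarith
  unfold Jt F gap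
  rw [Real.log_div h2 h1, div_div, mul_pow, div_eq_mul_inv, div_eq_mul_inv]
  have : (2 * (b ^ 4 + b ^ 2) / (1 - b ^ 2) ^ 2 + 2 * (a ^ 4 + a ^ 2) / (1 - a ^ 2) ^ 2
      - 4 * b ^ 2 * (a ^ 2 + 1) / ((1 - b ^ 2) * (1 - a ^ 2))) =
      (1 / 4) * ((1 / (1 - a ^ 2) - 1 / (1 - b ^ 2)) *
        (1 + 2 * (1 / (1 - a ^ 2) - 1 / (1 - b ^ 2))) * 8) := by
    field_simp
    ring
  rw [this, mul_inv]
  ring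

/-! ### Monotonicity along curves -/

/-- The quotient `L ^ 2 / D` is increasing as soon as its logarithmic derivative is nonnegative. -/
lemma sq_div_mono {L D L' D' : ℝ → ℝ} {a b : ℝ} (hab : a ≤ b)
    (hL : ∀ t ∈ Icc a b, HasDerivAt L (L' t) t) (hD : ∀ t ∈ Icc a b, HasDerivAt D (D' t) t)
    (hL0 : ∀ t ∈ Icc a b, 0 ≤ L t) (hD0 : ∀ t ∈ Icc a b, 0 < D t)
    (h : ∀ t ∈ Icc a b, L t * D' t ≤ 2 * L' t * D t) :
    L a ^ 2 / D a ≤ L b ^ 2 / D b := by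
  have hd : ∀ t ∈ Icc a b, HasDerivAt (fun t => L t ^ 2 / D t)
      ((2 * L t * L' t * D t - L t ^ 2 * D' t) / D t ^ 2) t := fun t ht => by
    have := ((hL t ht).pow 2).div (hD t ht) (hD0 t ht).ne'
    refine this.congr_deriv ?_
    simp
  have := monotoneOn_of_deriv_nonneg (convex_Icc a b)
    (fun t ht => (hd t ht).continuousAt.continuousWithinAt)
    (fun t ht => (hd t (interior_subset ht)).differentiableAt.differentiableWithinAt)
    (fun t ht => by
      have ht := interior_subset ht
      rw [(hd t ht).deriv]
      refine div_nonneg ?_ (sq_nonneg _)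
      nlinarith [mul_le_mul_of_nonneg_left (h t ht) (hL0 t ht)])
  exact this (left_mem_Icc.2 hab) (right_mem_Icc.2 hab) hab

lemma hasDerivAt_inv_one_sub {u : ℝ → ℝ} {u' t : ℝ} (hu : HasDerivAt u u' t) (h : u t < 1) :
    HasDerivAt (fun t => 1 / (1 - u t)) (u' / (1 - u t) ^ 2) t := by
  have := (hasDerivAt_const t (1 : ℝ)).div (hu.const_sub 1) (by linarith : (1 - u t) ≠ 0)
  refine this.congr_deriv ?_
  ring

lemma gap_eq {x w : ℝ} (hx : x < 1) (hw : w < 1) :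
    gap x w = (x - w) / ((1 - x) * (1 - w)) := by
  have h1 : (1 - x) ≠ 0 := by linarith
  have h2 : (1 - w) ≠ 0 := by linarith
  unfold gap
  field_simp
  ring

lemma gap_pos {x w : ℝ} (hx : x < 1) (hw : w < x) : 0 < gap x w := by
  rw [gap_eq hx (hw.trans hx)]
  exact div_pos (by linarith) (mul_pos (by linarith) (by linarith))

lemma log_sub_nonneg {x w : ℝ} (hx : x < 1) (hw : w ≤ x) :
    0 ≤ Real.log (1 - w) - Real.log (1 - x) :=
  sub_nonneg.2 (Real.log_le_log (by linarith) (by linarith))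

/-- Monotonicity of `F` along the curve `t ↦ (u t, v t)`, reduced to the sign of the derivative. -/
lemma F_mono_curve {u v u' v' : ℝ → ℝ} {a b : ℝ} (hab : a ≤ b)
    (hu : ∀ t ∈ Icc a b, HasDerivAt u (u' t) t) (hv : ∀ t ∈ Icc a b, HasDerivAt v (v' t) t)
    (hu1 : ∀ t ∈ Icc a b, u t < 1) (hvu : ∀ t ∈ Icc a b, v t < u t)
    (h : ∀ t ∈ Icc a b, (Real.log (1 - v t) - Real.log (1 - u t)) *
      ((u' t / (1 - u t) ^ 2 - v' t / (1 - v t) ^ 2) * (1 + 4 * gap (u t) (v t))) ≤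
      2 * (u' t / (1 - u t) - v' t / (1 - v t)) *
        (gap (u t) (v t) * (1 + 2 * gap (u t) (v t)))) :
    F (u a) (v a) ≤ F (u b) (v b) := by
  refine sq_div_mono (L := fun t => Real.log (1 - v t) - Real.log (1 - u t))
    (D := fun t => gap (u t) (v t) * (1 + 2 * gap (u t) (v t))) hab
    (fun t ht => ?_) (fun t ht => ?_)
    (fun t ht => log_sub_nonneg (hu1 t ht) (hvu t ht).le) (fun t ht => ?_) h
  · have h1 := ((hv t ht).const_sub 1).log (by linarith [hvu t ht, hu1 t ht])
    have h2 := ((hu t ht).const_sub 1).log (by linarith [hu1 t ht])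
    refine (h1.sub h2).congr_deriv ?_
    ring
  · have h1 := (hasDerivAt_inv_one_sub (hu t ht) (hu1 t ht)).sub
      (hasDerivAt_inv_one_sub (hv t ht) ((hvu t ht).trans (hu1 t ht)))
    refine (h1.mul ((h1.const_mul 2).const_add 1)).congr_deriv ?_
    simp only [gap, Pi.sub_apply]
    ring
  · have := gap_pos (hu1 t ht) (hvu t ht)
    positivity

/-! ### Rational bounds for the logarithm -/

/-- With `1 + s = (1-w)/(1-x)`, this is the bound `log (1+s) ≤ s`. -/
lemma log_sub_le {x w : ℝ} (hx : x < 1) (hw : w ≤ x) :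
    Real.log (1 - w) - Real.log (1 - x) ≤ (x - w) / (1 - x) := by
  have h1 : (0 : ℝ) < 1 - x := by linarith
  rw [← Real.log_div (by linarith) h1.ne']
  refine (Real.log_le_sub_one_of_pos (div_pos (by linarith) h1)).trans_eq ?_
  field_simp
  ring

/-- With `1 + s = (1-w)/(1-x)`, this is the bound `log (1+s) ≤ s(s+2)/(2(1+s))`. -/
lemma log_sub_le' {x w : ℝ} (hx : x < 1) (hw : w ≤ x) :
    Real.log (1 - w) - Real.log (1 - x) ≤
      (x - w) * (2 - x - w) / (2 * (1 - x) * (1 - w)) := by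
  have h1 : (0 : ℝ) < 1 - x := by linarith
  have h2 : (0 : ℝ) < 2 - x - w := by linarith
  have h3 : (0 : ℝ) < 1 - w := by linarith
  have key := Real.log_div_le_sum_range_add (x := (x - w) / (2 - x - w))
    (div_nonneg (by linarith) h2.le) ((div_lt_one h2).2 (by linarith)) 1
  have e : (1 + (x - w) / (2 - x - w)) / (1 - (x - w) / (2 - x - w)) = (1 - w) / (1 - x) := by
    have : 1 - (x - w) / (2 - x - w) ≠ 0 := by
      rw [one_sub_div h2.ne']; exact (div_pos (by linarith) h2).ne'
    rw [div_eq_div_iff this h1.ne']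
    field_simp
    ring
  rw [e, Real.log_div h3.ne' h1.ne'] at key
  have e2 : (x - w) / (2 - x - w) + ((x - w) / (2 - x - w)) ^ 3 /
      (1 - ((x - w) / (2 - x - w)) ^ 2) =
      (1 / 2) * ((x - w) * (2 - x - w) / (2 * (1 - x) * (1 - w))) := by
    have : 1 - ((x - w) / (2 - x - w)) ^ 2 = 4 * (1 - x) * (1 - w) / (2 - x - w) ^ 2 := by
      field_simp
      ring
    rw [this]
    field_simp
    ring
  simp at key
  norm_num at e2
  linarith

/-- With `1 + s = (1-w)/(1-x)`, this is the bound `2s/(s+2) ≤ log (1+s)`. -/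
lemma le_log_sub {x w : ℝ} (hx : x < 1) (hw : w ≤ x) :
    2 * (x - w) / (2 - x - w) ≤ Real.log (1 - w) - Real.log (1 - x) := by
  have h1 : (0 : ℝ) < 1 - x := by linarith
  have h2 : (0 : ℝ) < 2 - x - w := by linarith
  have h := Real.le_log_one_add_of_nonneg (x := (x - w) / (1 - x))
    (div_nonneg (by linarith) h1.le)
  have e : 1 + (x - w) / (1 - x) = (1 - w) / (1 - x) := by field_simp; ring
  have e2 : 2 * ((x - w) / (1 - x)) / ((x - w) / (1 - x) + 2) = 2 * (x - w) / (2 - x - w) := by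
    have : (x - w) / (1 - x) + 2 = (2 - x - w) / (1 - x) := by field_simp; ring
    rw [this]
    field_simp
  rwa [e, e2, Real.log_div (by linarith) h1.ne'] at h

/-! ### Monotonicity of `F` -/

/-- `F x` is decreasing in its second argument on `w < x`; already `log (1 + s) ≤ s` suffices. -/
lemma F_anti {x w₁ w₂ : ℝ} (hx : x < 1) (h12 : w₁ ≤ w₂) (h2 : w₂ < x) :
    F x w₂ ≤ F x w₁ := by
  have := F_mono_curve (u := fun _ => x) (v := fun t => -t) (u' := fun _ => 0) (v' := fun _ => -1)
    (a := -w₂) (b := -w₁) (by linarith) (fun t _ => hasDerivAt_const t x)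
    (fun t _ => hasDerivAt_neg t) (fun _ _ => hx) (fun t ht => by linarith [ht.1]) ?_
  · simpa using this
  intro t ht
  obtain ⟨w, rfl⟩ : ∃ w, t = -w := ⟨-t, by ring⟩
  have hw : w < x := by linarith [ht.1]
  have hw1 : 0 < 1 - w := by linarith
  have hx1 : 0 < 1 - x := by linarith
  have hg := gap_pos hx hw
  have hl := log_sub_le hx hw.le
  have hge := gap_eq hx (hw.trans hx)
  have hl' : Real.log (1 - w) - Real.log (1 - x) ≤ gap x w * (1 - w) := by
    rw [hge]; refine hl.trans_eq ?_; field_simp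
  simp only [neg_neg]
  have : (Real.log (1 - w) - Real.log (1 - x)) * (1 + 4 * gap x w)
      ≤ gap x w * (1 - w) * (2 * (1 + 2 * gap x w)) :=
    mul_le_mul hl' (by linarith) (by positivity) (by positivity)
  calc _ = (Real.log (1 - w) - Real.log (1 - x)) * (1 + 4 * gap x w) / (1 - w) ^ 2 := by ring
    _ ≤ gap x w * (1 - w) * (2 * (1 + 2 * gap x w)) / (1 - w) ^ 2 := by gcongr
    _ = _ := by field_simp; ring

/-- The diagonal case `t = x` of `poly_C`, with the factor `(1 - x) ^ 3` removed. -/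
lemma poly_C_diag {x : ℝ} (ht : 0 < x) (hx : x ≤ 0.3976) :
    (2 + x) * (1 + x + x ^ 2) * (1 + 4 * x - x ^ 2) ≤ 4 * (1 + x) * (1 + 2 * x - x ^ 2) := by
  nlinarith [pow_pos ht 2, pow_pos ht 3, pow_pos ht 4, mul_nonneg ht.le (sub_nonneg.2 hx),
    mul_nonneg (pow_pos ht 2).le (sub_nonneg.2 hx), mul_nonneg (pow_pos ht 3).le (sub_nonneg.2 hx),
    mul_nonneg (pow_pos ht 4).le (sub_nonneg.2 hx)]

/-- If `g t` is the right side of `poly_C` minus the left side, this polynomial is the divided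
difference `(g t - g x) / (x - t)`. -/
lemma poly_C_quot {x t : ℝ} (ht : 0 < t) (htx : t ≤ x) (hx : x ≤ 0.3976) :
    0 ≤ 5 + t + 6 * x - 14 * x * t - 6 * x * t ^ 2
      + 3 * x * t ^ 3 - 14 * x ^ 2 - 13 * x ^ 2 * t + 29 * x ^ 2 * t ^ 2 - 8 * x ^ 2 * t ^ 3
      + x ^ 2 * t ^ 4 - 13 * x ^ 3 + 29 * x ^ 3 * t - 8 * x ^ 3 * t ^ 2 - 4 * x ^ 3 * t ^ 3
      + x ^ 3 * t ^ 4 + 29 * x ^ 4 - 8 * x ^ 4 * t - 4 * x ^ 4 * t ^ 2 + x ^ 4 * t ^ 3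
      - 8 * x ^ 5 - 4 * x ^ 5 * t + x ^ 5 * t ^ 2 - 4 * x ^ 6 + x ^ 6 * t
      + x ^ 7 := by
  have hx0 : 0 < x := by linarith
  have hx1 : 0 ≤ 0.3976 - x := by linarith
  have ht1 : 0 ≤ 0.3976 - t := by linarith
  have e : ∀ i j : ℕ, 0 ≤ x ^ i * t ^ j := fun i j => by positivity
  have a : ∀ i j : ℕ, x ^ (i + 1) * t ^ j ≤ 0.3976 * (x ^ i * t ^ j) := fun i j => by
    rw [pow_succ]; nlinarith [e i j, mul_nonneg (e i j) hx1]
  have b : ∀ i j : ℕ, x ^ i * t ^ (j + 1) ≤ 0.3976 * (x ^ i * t ^ j) := fun i j => by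
    rw [pow_succ]; nlinarith [e i j, mul_nonneg (e i j) ht1]
  -- multiplying a monomial by `x` or `t` scales it by at most `0.3976`; the rest is linear in
  -- the monomials
  linarith [a 0 0, b 0 0, e 0 0, a 0 1, b 0 1, e 0 1, a 0 2, b 0 2, e 0 2, a 0 3, b 0 3, e 0 3,
    a 0 4, b 0 4, e 0 4, a 1 0, b 1 0, e 1 0, a 1 1, b 1 1, e 1 1, a 1 2, b 1 2, e 1 2, a 1 3,
    b 1 3, e 1 3, a 1 4, b 1 4, e 1 4, a 2 0, b 2 0, e 2 0, a 2 1, b 2 1, e 2 1, a 2 2, b 2 2,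
    e 2 2, a 2 3, b 2 3, e 2 3, a 2 4, b 2 4, e 2 4, a 3 0, b 3 0, e 3 0, a 3 1, b 3 1, e 3 1,
    a 3 2, b 3 2, e 3 2, a 3 3, b 3 3, e 3 3, a 3 4, b 3 4, e 3 4, a 4 0, b 4 0, e 4 0, a 4 1,
    b 4 1, e 4 1, a 4 2, b 4 2, e 4 2, a 4 3, b 4 3, e 4 3, a 5 0, b 5 0, e 5 0, a 5 1, b 5 1,
    e 5 1, a 5 2, b 5 2, e 5 2, a 6 0, b 6 0, e 6 0, a 6 1, b 6 1, e 6 1, a 7 0, b 7 0, e 7 0]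

/-- The derivative condition for `F_diag_mono`, after bounding the logarithm and clearing
denominators. The right side minus the left side is its value at `t = x` plus `x - t` times the
polynomial of `poly_C_quot`. -/
lemma poly_C {x t : ℝ} (ht : 0 < t) (htx : t ≤ x) (hx : x ≤ 0.3976) :
    (2 - t - x * t) * (1 - x * t ^ 2) * ((1 - t) * (1 - x * t) + 4 * t * (1 - x)) ≤
      4 * ((1 - t) * (1 - x * t)) * ((1 - t) * (1 - x * t) + 2 * t * (1 - x)) := by
  have hx0 : 0 < x := by linarith
  have h3 : 0 ≤ (1 - x) ^ 3 := pow_nonneg (by linarith) 3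
  linarith [mul_nonneg (sub_nonneg.2 htx) (poly_C_quot ht htx hx),
    mul_nonneg h3 (sub_nonneg.2 (poly_C_diag hx0 hx))]

/-- `t ↦ F t (x * t)` is increasing on `(0, x]`. -/
lemma F_diag_mono {x y z : ℝ} (hz : 0 < z) (hzy : z ≤ y) (hyx : y ≤ x) (hx : x ≤ 0.3976) :
    F z (x * z) ≤ F y (x * y) := by
  refine F_mono_curve (u := fun t => t) (v := fun t => x * t) (u' := fun _ => 1)
    (v' := fun _ => x) hzy (fun t _ => hasDerivAt_id t)
    (fun t _ => by simpa using (hasDerivAt_id t).const_mul x)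
    (fun t ht => by linarith [ht.2]) (fun t ht => by nlinarith [ht.1, ht.2]) ?_
  intro t ht
  have ht0 : 0 < t := hz.trans_le ht.1
  have htx : t ≤ x := ht.2.trans hyx
  have h1 : 0 < 1 - t := by linarith
  have hxt : x * t < t := by nlinarith
  have h2 : 0 < 1 - x * t := by linarith
  have h3 : 0 < 1 - x := by linarith
  have h2' : 1 - t * x ≠ 0 := by rw [mul_comm]; exact h2.ne'
  have hg := gap_pos (by linarith : t < 1) hxt
  have hp := poly_C ht0 htx hx
  have hd : (0 : ℝ) ≤ 1 / (1 - t) ^ 2 - x / (1 - x * t) ^ 2 := by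
    have : 1 / (1 - t) ^ 2 - x / (1 - x * t) ^ 2 =
        (1 - x) * (1 - x * t ^ 2) / ((1 - t) ^ 2 * (1 - x * t) ^ 2) := by
      field_simp
      ring
    rw [this]
    have : 0 ≤ 1 - x * t ^ 2 := by nlinarith
    positivity
  refine (mul_le_mul_of_nonneg_right (log_sub_le' (by linarith) hxt.le) (by positivity)).trans ?_
  have hge := gap_eq (by linarith : t < 1) (by linarith : x * t < 1)
  rw [hge, ← sub_nonneg]
  have : 2 * (1 / (1 - t) - x / (1 - x * t)) *
        ((t - x * t) / ((1 - t) * (1 - x * t)) * (1 + 2 * ((t - x * t) / ((1 - t) * (1 - x * t))))) -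
      (t - x * t) * (2 - t - x * t) / (2 * (1 - t) * (1 - x * t)) *
        ((1 / (1 - t) ^ 2 - x / (1 - x * t) ^ 2) *
          (1 + 4 * ((t - x * t) / ((1 - t) * (1 - x * t))))) =
      t * (1 - x) ^ 2 / (2 * (1 - t) ^ 4 * (1 - x * t) ^ 4) *
      (4 * ((1 - t) * (1 - x * t)) * ((1 - t) * (1 - x * t) + 2 * t * (1 - x)) -
      (2 - t - x * t) * (1 - x * t ^ 2) * ((1 - t) * (1 - x * t) + 4 * t * (1 - x))) := by
    field_simp
    ring
  rw [this]
  exact mul_nonneg (by positivity) (by linarith)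

/-! ### Comparing the two terms of the minimum -/

/-- If `y` is comparable to `x`, then `t ↦ F t (x * y)` is increasing on all of `[y, x]`. -/
lemma F_swap_large {x y : ℝ} (hy : 0 < y) (hyx : y ≤ x) (hx : x ≤ 0.3976) (h3 : x / 3 ≤ y) :
    F y (x * y) ≤ F x (x * y) := by
  have hxy : x * y < y := by nlinarith
  refine F_mono_curve (u := fun t => t) (v := fun _ => x * y) (u' := fun _ => 1)
    (v' := fun _ => 0) hyx (fun t _ => hasDerivAt_id t) (fun t _ => hasDerivAt_const t _)
    (fun t ht => by linarith [ht.2]) (fun t ht => by linarith [ht.1]) ?_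
  intro t ht
  generalize hw : x * y = w at *
  have hwt : w < t := by linarith [ht.1]
  have h1 : 0 < 1 - t := by linarith [ht.2]
  have h2 : 0 < 1 - w := by linarith
  have hw0 : x ^ 2 / 3 ≤ w := by nlinarith
  have hg := gap_pos (by linarith : t < 1) hwt
  have hge := gap_eq (by linarith : t < 1) (by linarith : w < 1)
  have ht2 := ht.2
  have hn : x - x ^ 2 / 3 ≤ 0.345 := by nlinarith
  -- for fixed `x`, both `s = (1-w)/(1-t) - 1` and `d = gap t w` are largest at `t = x`, `y = x/3`
  have hs : (t - w) / (1 - t) ≤ 0.573 := by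
    rw [div_le_iff₀ h1]; nlinarith
  have hd : gap t w ≤ 0.605 := by
    have e1 : gap t w ≤ gap x (x ^ 2 / 3) := by
      unfold gap
      have a1 : 1 / (1 - t) ≤ 1 / (1 - x) := one_div_le_one_div_of_le (by linarith) (by linarith)
      have a2 : 1 / (1 - x ^ 2 / 3) ≤ 1 / (1 - w) :=
        one_div_le_one_div_of_le (by linarith) (by linarith)
      linarith
    refine e1.trans ?_
    rw [gap_eq (by linarith) (by nlinarith), div_le_iff₀ (mul_pos (by linarith) (by nlinarith))]
    have : (0.6024 : ℝ) * 0.9473 ≤ (1 - x) * (1 - x ^ 2 / 3) :=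
      mul_le_mul (by linarith) (by nlinarith) (by norm_num) (by linarith)
    linarith
  have hs0 : 0 ≤ (t - w) / (1 - t) := div_nonneg (by linarith) h1.le
  have hsd : (t - w) / (1 - t) * (1 + 4 * gap t w) ≤ 2 := by
    calc _ ≤ 0.573 * (1 + 4 * 0.605 : ℝ) := by gcongr
      _ ≤ 2 := by norm_num
  simp only [zero_div, sub_zero]
  refine (mul_le_mul_of_nonneg_right (log_sub_le' (by linarith) hwt.le) (by positivity)).trans ?_
  generalize hd' : gap t w = d at *
  have hsw : (t - w) / (1 - t) = d * (1 - w) := by rw [hge]; field_simp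
  have : (t - w) = d * ((1 - t) * (1 - w)) := by rw [hge]; field_simp
  have e2 : (t - w) * (2 - t - w) / (2 * (1 - t) * (1 - w)) =
      d * (1 - t) * (2 + (t - w) / (1 - t)) / 2 := by
    rw [hge]; field_simp; ring
  rw [e2]
  have e3 : d * (1 - t) * (2 + (t - w) / (1 - t)) / 2 *
      (1 / (1 - t) ^ 2 * (1 + 4 * d)) =
      d / (2 * (1 - t)) * ((2 + (t - w) / (1 - t)) * (1 + 4 * d)) := by
    field_simp
  rw [e3]
  calc _ ≤ d / (2 * (1 - t)) * (4 * (1 + 2 * d)) := by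
        exact mul_le_mul_of_nonneg_left (by linarith) (by positivity)
    _ = _ := by field_simp; ring

/-- If `y` is much smaller than `x`, crude bounds on the logarithms suffice. -/
lemma F_swap_small {x y : ℝ} (hy : 0 < y) (hyx : y ≤ x / 3) (hx : x ≤ 0.3976) :
    F y (x * y) ≤ F x (x * y) := by
  have hxy : x * y < y := by nlinarith
  have hx1 : 0 < 1 - x := by linarith
  have hy1 : 0 < 1 - y := by linarith
  have hw1 : 0 < 1 - x * y := by linarith
  set q := 1 / (1 - x * y) with hq
  set s := (x - x * y) / (1 - x) with hs
  set r := (y - x * y) / (1 - y) with hr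
  have hq0 : 0 < q := by positivity
  have hs0 : 0 < s := div_pos (by nlinarith) hx1
  have hr0 : 0 < r := div_pos (by linarith) hy1
  have hgx : gap x (x * y) = s * q := by
    rw [gap_eq (by linarith) (by linarith)]; simp only [hs, hq]; field_simp
  have hgy : gap y (x * y) = r * q := by
    rw [gap_eq (by linarith) (by linarith)]; simp only [hr, hq]; field_simp
  have hly : Real.log (1 - x * y) - Real.log (1 - y) ≤ r := log_sub_le (by linarith) hxy.le
  have hly0 := log_sub_nonneg (by linarith : y < 1) hxy.le
  have hlx := le_log_sub (by linarith : x < 1) (by linarith : x * y ≤ x)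
  have e : 2 * (x - x * y) / (2 - x - x * y) = 2 * s / (2 + s) := by
    have : 2 + s = (2 - x - x * y) / (1 - x) := by simp only [hs]; field_simp; ring
    have h' : 0 < 2 - x - x * y := by linarith
    rw [this]; simp only [hs]; field_simp
  rw [e] at hlx
  have hsq : s * q ≤ 0.661 := by
    simp only [hs, hq]
    rw [div_mul_div_comm, div_le_iff₀ (by positivity)]
    have : x * (1 - y) ≤ x * (1 - x * y) := by
      apply mul_le_mul_of_nonneg_left <;> nlinarith
    nlinarith [mul_pos hx1 hw1]
  have hs1 : s ≤ 0.661 := by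
    simp only [hs]; rw [div_le_iff₀ hx1]; nlinarith
  -- `r/s = (y/x) * ((1-x)/(1-y))^2`, with `y/x ≤ 1/3` and `(1-y)/(1-x) ≥ 1 + 2s/3`
  have hrs : r * (1 + 2 * s / 3) ^ 2 ≤ s / 3 := by
    have h1 : 1 + 2 * s / 3 ≤ (1 - y) / (1 - x) := by
      simp only [hs]; rw [le_div_iff₀ hx1]; field_simp; nlinarith
    have h2 : r * ((1 - y) / (1 - x)) ^ 2 = y * (1 - y) / (1 - x) := by
      simp only [hr]; field_simp
    have h3 : y * (1 - y) / (1 - x) ≤ s / 3 := by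
      simp only [hs]; rw [div_div, div_le_div_iff₀ hx1 (by positivity)]
      nlinarith [mul_pos hx1 hy1]
    calc _ ≤ r * ((1 - y) / (1 - x)) ^ 2 := by gcongr
      _ ≤ _ := by rw [h2]; exact h3
  unfold F
  rw [hgx, hgy]
  clear_value q s r
  calc _ ≤ r ^ 2 / (r * q * (1 + 2 * (r * q))) := by gcongr
    _ ≤ r ^ 2 / (r * q * 1) := by gcongr; linarith [mul_pos hr0 hq0]
    _ = r / q := by field_simp
    _ ≤ (2 * s / (2 + s)) ^ 2 / (s * q * (1 + 2 * (0.661))) := by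
      rw [div_pow, div_div, div_le_div_iff₀ hq0 (by positivity)]
      have : r * ((2 + s) ^ 2 * 2.322) ≤ 4 * s := by
        have : (2 + s) ^ 2 * 2.322 ≤ 12 * (1 + 2 * s / 3) ^ 2 := by nlinarith
        calc _ ≤ r * (12 * (1 + 2 * s / 3) ^ 2) := by gcongr
          _ ≤ _ := by linarith
      nlinarith [mul_le_mul_of_nonneg_left this (mul_pos hs0 hq0).le]
    _ ≤ _ := by gcongr

lemma F_swap {x y : ℝ} (hy : 0 < y) (hyx : y ≤ x) (hx : x ≤ 0.3976) :
    F y (x * y) ≤ F x (x * y) :=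
  (le_total (x / 3) y).elim (F_swap_large hy hyx hx) (fun h => F_swap_small hy h hx)

/-- The minimum in `W` is attained at the smaller correlation. -/
lemma W_eq {a b : ℝ} (hb : b ≠ 0) (hba : |b| ≤ |a|) (ha : |a| ≤ 0.63055) :
    W a b = F (b ^ 2) (a ^ 2 * b ^ 2) / 8 := by
  have h1 : b ^ 2 ≤ a ^ 2 := sq_le_sq.2 hba
  have h2 : a ^ 2 ≤ 0.3976 := by rw [← sq_abs]; nlinarith [abs_nonneg a]
  have h3 : 0 < b ^ 2 := by positivity
  have h4 : (a * b) ^ 2 < 1 := by rw [mul_pow]; nlinarith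
  unfold W
  rw [Jt_eq _ _ (by linarith) h4, Jt_eq _ _ (by linarith) h4, mul_pow]
  exact min_eq_right (by linarith [F_swap h3 h1 h2])

end Crossover

open Crossover in
/-- If |ρ_i| ≥ |ρ_j| ≥ |ρ_k| and |ρ_i| ≤ ρcrit = 0.63055, then
W(ρ_i, ρ_k) ≤ min{W(ρ_i, ρ_j), W(ρ_j, ρ_k)}. -/
theorem W_triangle (ρi ρj ρk : ℝ)
    (hi : ρi ∈ Set.Ioo (-1 : ℝ) 1) (hj : ρj ∈ Set.Ioo (-1 : ℝ) 1)
    (hk : ρk ∈ Set.Ioo (-1 : ℝ) 1)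
    (hi0 : ρi ≠ 0) (hj0 : ρj ≠ 0) (hk0 : ρk ≠ 0)
    (hji : |ρj| ≤ |ρi|) (hkj : |ρk| ≤ |ρj|) (hcrit : |ρi| ≤ 0.63055) :
    W ρi ρk ≤ min (W ρi ρj) (W ρj ρk) := by
  have hx : ρi ^ 2 ≤ 0.3976 := by rw [← sq_abs]; nlinarith [abs_nonneg ρi]
  have hyx : ρj ^ 2 ≤ ρi ^ 2 := sq_le_sq.2 hji
  have hzy : ρk ^ 2 ≤ ρj ^ 2 := sq_le_sq.2 hkj
  have hz : 0 < ρk ^ 2 := by positivity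
  rw [W_eq hk0 (hkj.trans hji) hcrit, W_eq hj0 hji hcrit, W_eq hk0 hkj (hji.trans hcrit)]
  refine le_min ?_ ?_
  · linarith [F_diag_mono hz hzy hyx hx]
  · have : F (ρk ^ 2) (ρi ^ 2 * ρk ^ 2) ≤ F (ρk ^ 2) (ρj ^ 2 * ρk ^ 2) :=
      F_anti (by linarith) (by gcongr) (by nlinarith)
    linarith
end
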